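/- arXiv:1212.3828 — 2 statements merged into one kernel-verified Lean document; each statement's English description precedes it below -/
import Mathlib

section
/- For every real number τ > 0 there exist R > 0 and a function h : ℝ → ℝ that is infinitely differentiable, satisfies h(r) = e^r + τ for all r ≤ 0 and h(r) = e^r for all r ≥ R, and has deriv h r > 0 and second derivative (deriv (deriv h)) r > 0 for all r ∈ ℝ (in particular h is positive, strictly increasing, and strictly convex). -/
/-!
Add to `e^r` a smooth step descending from `τ` to `0`, stretched over a long interval `[0, R]`.
Stretching multiplies the `k`-th derivative of the step by `R⁻ᵏ`, so for `R` large the derivatives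
of the stretched step up to any fixed order are smaller than `1 ≤ e^r` on `[0, ∞)`, while on
`(-∞, 0)` they vanish.
-/

open Filter Set
open scoped Topology

section IteratedDeriv

variable {𝕜 F : Type*} [NontriviallyNormedField 𝕜] [NormedAddCommGroup F] [NormedSpace 𝕜 F]

lemma eqOn_iteratedDeriv_zero_of_eqOn_const {f : 𝕜 → F} {s : Set 𝕜} {c : F} {k : ℕ}
    (hs : IsOpen s) (hf : EqOn f (fun _ ↦ c) s) (hk : k ≠ 0) : EqOn (iteratedDeriv k f) 0 s :=
  fun x hx ↦ by
    rw [hf.iteratedDeriv_of_isOpen hs k hx, iteratedDeriv_const, if_neg hk, Pi.zero_apply]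

lemma eventually_norm_iteratedDeriv_comp_const_mul_lt {f : 𝕜 → F} {k : ℕ} {C ε : ℝ}
    (hf : ContDiff 𝕜 k f) (hk : k ≠ 0) (hC : ∀ x, ‖iteratedDeriv k f x‖ ≤ C) (hε : 0 < ε) :
    ∀ᶠ c in 𝓝 (0 : 𝕜), ∀ x, ‖iteratedDeriv k (fun y ↦ f (c * y)) x‖ < ε := by
  have tendsto_bound : Tendsto (fun c : 𝕜 ↦ ‖c‖ ^ k * C) (𝓝 0) (𝓝 0) := by
    have : Continuous fun c : 𝕜 ↦ ‖c‖ ^ k * C := by fun_prop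
    simpa [hk] using this.tendsto 0
  filter_upwards [tendsto_bound.eventually_lt_const hε] with c hc x
  calc ‖iteratedDeriv k (fun y ↦ f (c * y)) x‖
      = ‖c‖ ^ k * ‖iteratedDeriv k f (c * x)‖ := by
        rw [iteratedDeriv_comp_const_smul hf, norm_smul, norm_pow]
    _ ≤ ‖c‖ ^ k * C := by gcongr; exact hC _
    _ < ε := hc

end IteratedDeriv

lemma hasCompactSupport_iteratedDeriv_of_eqOn_const {F : Type*} [NormedAddCommGroup F]
    [NormedSpace ℝ F] {f : ℝ → F} {a b : ℝ} {c d : F} {k : ℕ} (ha : EqOn f (fun _ ↦ c) (Iio a))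
    (hb : EqOn f (fun _ ↦ d) (Ioi b)) (hk : k ≠ 0) : HasCompactSupport (iteratedDeriv k f) := by
  refine HasCompactSupport.intro (isCompact_Icc (a := a) (b := b)) fun x hx ↦ ?_
  rcases lt_or_ge x a with hxa | hax
  · exact eqOn_iteratedDeriv_zero_of_eqOn_const isOpen_Iio ha hk hxa
  · have hbx : b < x := not_le.1 fun hxb ↦ hx ⟨hax, hxb⟩
    exact eqOn_iteratedDeriv_zero_of_eqOn_const isOpen_Ioi hb hk hbx

lemma iteratedDeriv_exp_add_pos {g : ℝ → ℝ} {c : ℝ} {k : ℕ} (hg : ContDiff ℝ k g) (hk : k ≠ 0)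
    (hconst : EqOn g (fun _ ↦ c) (Iio 0)) (hlt : ∀ r, ‖iteratedDeriv k g r‖ < 1) (r : ℝ) :
    0 < iteratedDeriv k (Real.exp + g) r := by
  rw [iteratedDeriv_add Real.contDiff_exp.contDiffAt hg.contDiffAt, iteratedDeriv_eq_iterate,
    Real.iter_deriv_exp]
  rcases lt_or_ge r 0 with hr | hr
  · rw [eqOn_iteratedDeriv_zero_of_eqOn_const isOpen_Iio hconst hk hr, Pi.zero_apply, add_zero]
    exact Real.exp_pos r
  · linarith [Real.one_le_exp hr, neg_lt_of_abs_lt (hlt r)]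

/-- The smooth step from height `τ` on `(-∞, 0]` to `0` on `[1, ∞)`, which `x ↦ c * x` stretches to
`[0, c⁻¹]`. -/
noncomputable def smoothDescent (τ x : ℝ) : ℝ :=
  τ * (1 - Real.smoothTransition x)

namespace smoothDescent

lemma of_nonpos (τ : ℝ) {x : ℝ} (hx : x ≤ 0) : smoothDescent τ x = τ := by
  rw [smoothDescent, Real.smoothTransition.zero_of_nonpos hx, sub_zero, mul_one]

lemma of_one_le (τ : ℝ) {x : ℝ} (hx : 1 ≤ x) : smoothDescent τ x = 0 := by
  rw [smoothDescent, Real.smoothTransition.one_of_one_le hx, sub_self, mul_zero]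

protected lemma contDiff (τ : ℝ) {n : ℕ∞} : ContDiff ℝ n (smoothDescent τ) :=
  contDiff_const.mul (contDiff_const.sub Real.smoothTransition.contDiff)

lemma exists_norm_iteratedDeriv_le (τ : ℝ) {k : ℕ} (hk : k ≠ 0) :
    ∃ C, ∀ x, ‖iteratedDeriv k (smoothDescent τ) x‖ ≤ C :=
  (hasCompactSupport_iteratedDeriv_of_eqOn_const (fun _ hx ↦ of_nonpos τ (le_of_lt hx))
    (fun _ hx ↦ of_one_le τ (le_of_lt hx)) hk).exists_bound_of_continuous
    ((smoothDescent.contDiff τ (n := k)).continuous_iteratedDeriv' k)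

lemma exists_pos_forall_norm_iteratedDeriv_comp_const_mul_lt (τ : ℝ) (n : ℕ) {ε : ℝ}
    (hε : 0 < ε) : ∃ c : ℝ, 0 < c ∧ ∀ k ∈ Finset.Icc 1 n, ∀ r,
      ‖iteratedDeriv k (fun x ↦ smoothDescent τ (c * x)) r‖ < ε := by
  have eventually_lt : ∀ᶠ c in 𝓝 (0 : ℝ), ∀ k ∈ Finset.Icc 1 n, ∀ r,
      ‖iteratedDeriv k (fun x ↦ smoothDescent τ (c * x)) r‖ < ε := by
    rw [Filter.eventually_all_finset]
    intro k hk
    have hk₀ : k ≠ 0 := Nat.one_le_iff_ne_zero.1 (Finset.mem_Icc.1 hk).1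
    obtain ⟨C, hC⟩ := exists_norm_iteratedDeriv_le τ hk₀
    exact eventually_norm_iteratedDeriv_comp_const_mul_lt (smoothDescent.contDiff τ) hk₀ hC hε
  exact (eventually_mem_nhdsWithin.and (eventually_lt.filter_mono nhdsWithin_le_nhds) :
    ∀ᶠ c in 𝓝[>] (0 : ℝ), _).exists

end smoothDescent

theorem stmt_4_general (τ : ℝ) (n : ℕ) :
    ∃ (R : ℝ) (h : ℝ → ℝ), 0 < R ∧ ContDiff ℝ (⊤ : ℕ∞) h ∧
      (∀ r ≤ (0 : ℝ), h r = Real.exp r + τ) ∧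
      (∀ r ≥ R, h r = Real.exp r) ∧
      ∀ k ∈ Finset.Icc 1 n, ∀ r : ℝ, 0 < iteratedDeriv k h r := by
  obtain ⟨c, hc, hlt⟩ :=
    smoothDescent.exists_pos_forall_norm_iteratedDeriv_comp_const_mul_lt τ n one_pos
  set g : ℝ → ℝ := fun r ↦ smoothDescent τ (c * r)
  have g_smooth {m : ℕ∞} : ContDiff ℝ m g :=
    (smoothDescent.contDiff τ).comp (contDiff_const.mul contDiff_id)
  have g_left (r : ℝ) (hr : r ≤ 0) : g r = τ :=
    smoothDescent.of_nonpos τ (mul_nonpos_of_nonneg_of_nonpos hc.le hr)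
  have g_right (r : ℝ) (hr : c⁻¹ ≤ r) : g r = 0 :=
    smoothDescent.of_one_le τ ((inv_le_iff_one_le_mul₀' hc).1 hr)
  refine ⟨c⁻¹, Real.exp + g, inv_pos.2 hc, Real.contDiff_exp.add g_smooth,
    fun r hr ↦ ?_, fun r hr ↦ ?_, fun k hk ↦ ?_⟩
  · rw [Pi.add_apply, g_left r hr]
  · rw [Pi.add_apply, g_right r hr, add_zero]
  · exact iteratedDeriv_exp_add_pos g_smooth (Nat.one_le_iff_ne_zero.1 (Finset.mem_Icc.1 hk).1)
      (fun r hr ↦ g_left r (le_of_lt hr)) (hlt k hk)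

/-- The auxiliary warping function of Theorem 4.1: for each `τ > 0` there are `R > 0` and a
smooth function `h` with `h(r) = e^r + τ` for `r ≤ 0`, `h(r) = e^r` for `r ≥ R`, and
`h′ > 0`, `h″ > 0` everywhere. -/
theorem stmt_4 (τ : ℝ) (hτ : 0 < τ) :
    ∃ (R : ℝ) (h : ℝ → ℝ), 0 < R ∧ ContDiff ℝ (⊤ : ℕ∞) h ∧
      (∀ r ≤ (0 : ℝ), h r = Real.exp r + τ) ∧
      (∀ r ≥ R, h r = Real.exp r) ∧
      (∀ r : ℝ, 0 < deriv h r) ∧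
      (∀ r : ℝ, 0 < deriv (deriv h) r) := by
  obtain ⟨R, h, hR, h_smooth, h_left, h_right, h_pos⟩ := stmt_4_general τ 2
  exact ⟨R, h, hR, h_smooth, h_left, h_right, by simpa using h_pos 1 (by simp),
    by simpa [iteratedDeriv_succ] using h_pos 2 (by simp)⟩
end

section
/- Let c₀, c₁, c₂, c₃, d₁, d₂, γ, s, Q, Q′, h be real numbers satisfying: c₀² + c₁² + c₂² + c₃² = 1, d₁² + d₂² = 1, c₁·d₁ + c₂·d₂ = 0, 0 < s ≤ 2, 1/2 ≤ Q ≤ 1, Q′ ≥ 0, |γ| ≤ 1/2, and h > 0. Define K₂₁ = s²/16 − Q, K₃₁ = s²/16 − Q, K₀₁ = −1, K₀₂ = −(Q′ + Q²), K₃₂ = −1/(4h²) − 3γ²/h² − 3γ²s²/4 − Q², and Rt = −γ·s·(1 − Q). Then (d₁c₂ − d₂c₁)²·K₂₁ + d₁²c₃²·K₃₁ + d₁²c₀²·K₀₁ + d₂²c₀²·K₀₂ + d₂²c₃²·K₃₂ + 3·d₁·d₂·c₀·c₃·Rt < 0. -/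
/-!
By orthonormality the squares multiplying the five sectional curvatures add up to one, so to bound
the sum by `-κ` one may add `κ` to each of these curvatures and bound the result by zero. The mixed
term involves only `d₁ * c₀` and `d₂ * c₃`, hence it suffices that the binary quadratic form in
these two products is negative semidefinite. Both the square of its mixed coefficient and the
summand `3 * γ ^ 2 * s ^ 2 / 4` of `-K₃₂` are quadratic in `γ * s`, so the discriminant condition
reduces to `3 * (1 - Q) ^ 2 ≤ 1 - κ`.
-/

theorem sum_sq_minors_eq_one {R : Type*} [CommRing R] {c₀ c₁ c₂ c₃ d₁ d₂ : R}
    (hc : c₀ ^ 2 + c₁ ^ 2 + c₂ ^ 2 + c₃ ^ 2 = 1)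
    (hd : d₁ ^ 2 + d₂ ^ 2 = 1)
    (hcd : c₁ * d₁ + c₂ * d₂ = 0) :
    (d₁ * c₂ - d₂ * c₁) ^ 2 + d₁ ^ 2 * c₃ ^ 2 + d₁ ^ 2 * c₀ ^ 2
      + d₂ ^ 2 * c₀ ^ 2 + d₂ ^ 2 * c₃ ^ 2 = 1 :=
  calc
    _ = (c₀ ^ 2 + c₁ ^ 2 + c₂ ^ 2 + c₃ ^ 2) * (d₁ ^ 2 + d₂ ^ 2) - (c₁ * d₁ + c₂ * d₂) ^ 2 := by
      ring
    _ = 1 := by rw [hc, hd, hcd]; ring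

section OrderedRing

variable {R : Type*} [CommRing R] [LinearOrder R] [IsStrictOrderedRing R]

theorem binary_quadratic_nonpos {a b c : R} (ha : a ≤ 0) (hc : c ≤ 0)
    (hdisc : b ^ 2 ≤ 4 * a * c) (x y : R) :
    a * x ^ 2 + b * x * y + c * y ^ 2 ≤ 0 := by
  rcases ha.eq_or_lt with rfl | ha
  · have hb : b = 0 := by simpa using hdisc
    simpa [hb] using mul_nonpos_of_nonpos_of_nonneg hc (sq_nonneg y)
  · have hsquare : 4 * a * (a * x ^ 2 + b * x * y + c * y ^ 2)
        = (2 * a * x + b * y) ^ 2 + (4 * a * c - b ^ 2) * y ^ 2 := by ring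
    have hnonneg : 0 ≤ 4 * a * (a * x ^ 2 + b * x * y + c * y ^ 2) := by
      rw [hsquare]
      exact add_nonneg (sq_nonneg _) (mul_nonneg (sub_nonneg.2 hdisc) (sq_nonneg y))
    exact nonpos_of_mul_nonneg_right hnonneg (mul_neg_of_pos_of_neg four_pos ha)

theorem curvature_sum_le_neg {c₀ c₁ c₂ c₃ d₁ d₂ K₂₁ K₃₁ K₀₁ K₀₂ K₃₂ Rt κ : R}
    (hc : c₀ ^ 2 + c₁ ^ 2 + c₂ ^ 2 + c₃ ^ 2 = 1)
    (hd : d₁ ^ 2 + d₂ ^ 2 = 1)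
    (hcd : c₁ * d₁ + c₂ * d₂ = 0)
    (h₂₁ : K₂₁ + κ ≤ 0) (h₃₁ : K₃₁ + κ ≤ 0) (h₀₁ : K₀₁ + κ ≤ 0)
    (h₀₂ : K₀₂ + κ ≤ 0) (h₃₂ : K₃₂ + κ ≤ 0)
    (hmixed : (3 * Rt) ^ 2 ≤ 4 * (K₀₁ + κ) * (K₃₂ + κ)) :
    (d₁ * c₂ - d₂ * c₁) ^ 2 * K₂₁ + d₁ ^ 2 * c₃ ^ 2 * K₃₁ + d₁ ^ 2 * c₀ ^ 2 * K₀₁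
      + d₂ ^ 2 * c₀ ^ 2 * K₀₂ + d₂ ^ 2 * c₃ ^ 2 * K₃₂ + 3 * d₁ * d₂ * c₀ * c₃ * Rt ≤ -κ := by
  have hone := sum_sq_minors_eq_one hc hd hcd
  have hform := binary_quadratic_nonpos h₀₁ h₃₂ hmixed (d₁ * c₀) (d₂ * c₃)
  have hb₂₁ := mul_nonpos_of_nonneg_of_nonpos (sq_nonneg (d₁ * c₂ - d₂ * c₁)) h₂₁
  have hb₃₁ := mul_nonpos_of_nonneg_of_nonpos (sq_nonneg (d₁ * c₃)) h₃₁
  have hb₀₂ := mul_nonpos_of_nonneg_of_nonpos (sq_nonneg (d₂ * c₀)) h₀₂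
  linear_combination hform + hb₂₁ + hb₃₁ + hb₀₂ - κ * hone

end OrderedRing

theorem stmt_13_general {c₀ c₁ c₂ c₃ d₁ d₂ γ s Q Q' h κ : ℝ}
    (hc : c₀ ^ 2 + c₁ ^ 2 + c₂ ^ 2 + c₃ ^ 2 = 1)
    (hd : d₁ ^ 2 + d₂ ^ 2 = 1)
    (hcd : c₁ * d₁ + c₂ * d₂ = 0)
    (hs : s ^ 2 / 16 + κ ≤ Q) (hQ : 3 * (1 - Q) ^ 2 ≤ 1 - κ)
    (hκ : κ ≤ Q ^ 2) (hκ' : κ ≤ Q' + Q ^ 2) (hh : h ≠ 0) :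
    (d₁ * c₂ - d₂ * c₁) ^ 2 * (s ^ 2 / 16 - Q)
      + d₁ ^ 2 * c₃ ^ 2 * (s ^ 2 / 16 - Q)
      + d₁ ^ 2 * c₀ ^ 2 * (-1)
      + d₂ ^ 2 * c₀ ^ 2 * (-(Q' + Q ^ 2))
      + d₂ ^ 2 * c₃ ^ 2 * (-(1 / (4 * h ^ 2)) - 3 * γ ^ 2 / h ^ 2 - 3 * γ ^ 2 * s ^ 2 / 4 - Q ^ 2)
      + 3 * d₁ * d₂ * c₀ * c₃ * (-(γ * s * (1 - Q))) ≤ -κ := by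
  set K₃₂ := -(1 / (4 * h ^ 2)) - 3 * γ ^ 2 / h ^ 2 - 3 * γ ^ 2 * s ^ 2 / 4 - Q ^ 2 with hK₃₂
  have h₀₁ : -1 + κ ≤ 0 := by linarith [sq_nonneg (1 - Q)]
  have h₂₁ : s ^ 2 / 16 - Q + κ ≤ 0 := by linarith
  have h₀₂ : -(Q' + Q ^ 2) + κ ≤ 0 := by linarith
  have hK₃₂_le : K₃₂ + κ ≤ -(3 / 4 * (γ * s) ^ 2) := by
    have hpos : 0 < 1 / (4 * h ^ 2) + 3 * γ ^ 2 / h ^ 2 := by positivity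
    rw [hK₃₂]
    linarith
  have h₃₂ : K₃₂ + κ ≤ 0 := hK₃₂_le.trans (neg_nonpos.2 (by positivity))
  have hmixed : (3 * -(γ * s * (1 - Q))) ^ 2 ≤ 4 * (-1 + κ) * (K₃₂ + κ) :=
    calc
      _ = 3 * (γ * s) ^ 2 * (3 * (1 - Q) ^ 2) := by ring
      _ ≤ 3 * (γ * s) ^ 2 * (1 - κ) := by gcongr
      _ = 4 * (-1 + κ) * -(3 / 4 * (γ * s) ^ 2) := by ring
      _ ≤ 4 * (-1 + κ) * (K₃₂ + κ) := mul_le_mul_of_nonpos_left hK₃₂_le (by linarith)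
  exact curvature_sum_le_neg hc hd hcd h₂₁ h₂₁ h₀₁ h₀₂ h₃₂ hmixed

/-- The central curvature estimate of Section 6: for orthonormal `C, D` the sectional
curvature sum is strictly negative. -/
theorem stmt_13 (c₀ c₁ c₂ c₃ d₁ d₂ γ s Q Q' h : ℝ)
    (hc : c₀ ^ 2 + c₁ ^ 2 + c₂ ^ 2 + c₃ ^ 2 = 1)
    (hd : d₁ ^ 2 + d₂ ^ 2 = 1)
    (hcd : c₁ * d₁ + c₂ * d₂ = 0)
    (hs₀ : 0 < s) (hs₂ : s ≤ 2)
    (hQ₁ : 1 / 2 ≤ Q) (hQ₂ : Q ≤ 1) (hQ' : 0 ≤ Q')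
    (hγ : |γ| ≤ 1 / 2) (hh : 0 < h) :
    (d₁ * c₂ - d₂ * c₁) ^ 2 * (s ^ 2 / 16 - Q)
      + d₁ ^ 2 * c₃ ^ 2 * (s ^ 2 / 16 - Q)
      + d₁ ^ 2 * c₀ ^ 2 * (-1)
      + d₂ ^ 2 * c₀ ^ 2 * (-(Q' + Q ^ 2))
      + d₂ ^ 2 * c₃ ^ 2 * (-(1 / (4 * h ^ 2)) - 3 * γ ^ 2 / h ^ 2 - 3 * γ ^ 2 * s ^ 2 / 4 - Q ^ 2)
      + 3 * d₁ * d₂ * c₀ * c₃ * (-(γ * s * (1 - Q))) < 0 := by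
  have hs : s ^ 2 / 16 + 1 / 4 ≤ Q := by nlinarith
  have hQ : 3 * (1 - Q) ^ 2 ≤ 1 - 1 / 4 := by nlinarith
  have hκ : 1 / 4 ≤ Q ^ 2 := by nlinarith
  exact (stmt_13_general hc hd hcd hs hQ hκ (by linarith) hh.ne').trans_lt (by norm_num)
end
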